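/- arXiv:2007.16134 — 2 statements merged into one kernel-verified Lean document; each statement's English description precedes it below -/
import Mathlib

section
/- For all α ∈ (0,1) and all z ≥ 0, the Mittag-Leffler function satisfies 1/(1 + Γ(1-α)·z) ≤ E_{α,1}(-z) ≤ 1/(1 + z/Γ(1+α)). -/
/-- The one-parameter Mittag-Leffler function `E_{α,1}(z) = ∑_{k=0}^∞ z^k / Γ(kα+1)`
(real argument). -/
noncomputable def mittagLeffler (α z : ℝ) : ℝ :=
  ∑' k : ℕ, z ^ k / Real.Gamma (k * α + 1)

open MeasureTheory Set Filter Topology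

noncomputable def MLE (α β z : ℝ) : ℝ := ∑' k : ℕ, z ^ k / Real.Gamma (k * α + β)

lemma gamma_lower (x M : ℝ) (hx : 1 ≤ x) (hM : 0 < M) :
    Real.exp (-(M+1)) * M ^ (x-1) ≤ Real.Gamma x := by
  rw [Real.Gamma_eq_integral (by linarith)]
  have hint := Real.GammaIntegral_convergent (s := x) (by linarith)
  have hsub : Icc M (M+1) ⊆ Ioi (0:ℝ) := fun u hu => lt_of_lt_of_le hM hu.1
  calc Real.exp (-(M+1)) * M ^ (x-1) 
      = ∫ u in Icc M (M+1), Real.exp (-(M+1)) * M ^ (x-1) := by simp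
    _ ≤ ∫ u in Icc M (M+1), Real.exp (-u) * u ^ (x-1) := by
        apply setIntegral_mono_on continuous_const.integrableOn_Icc (hint.mono_set hsub) measurableSet_Icc
        intro u hu
        have h1 : Real.exp (-(M+1)) ≤ Real.exp (-u) := Real.exp_le_exp.2 (by linarith [hu.2])
        have h2 : M ^ (x-1) ≤ u ^ (x-1) := Real.rpow_le_rpow hM.le hu.1 (by linarith)
        gcongr
    _ ≤ _ := by
        apply setIntegral_mono_set hint
        · filter_upwards [ae_restrict_mem measurableSet_Ioi] with u hu
          have : (0:ℝ) < u := hu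
          simp only [Pi.zero_apply]
          positivity
        · exact hsub.eventuallyLE

lemma ml_summable (α β R : ℝ) (hα : 0 < α) (hβ : 0 < β) (hR : 0 ≤ R) :
    Summable (fun k : ℕ => R ^ k / Real.Gamma (k * α + β)) := by
  -- choose M with M^α = 2(R+1)
  set M : ℝ := (2*(R+1)) ^ (1/α) with hMdef
  have hM : 0 < M := by positivity
  have hMα : M ^ α = 2 * (R+1) := by
    rw [hMdef, ← Real.rpow_mul (by positivity)]
    field_simp
    simp
  have hg : Summable (fun k : ℕ => (Real.exp (M+1) * M ^ (1-β)) * (1/2:ℝ)^k) :=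
    (summable_geometric_of_lt_one (by norm_num) (by norm_num)).mul_left _
  refine Summable.of_norm_bounded_eventually_nat hg ?_
  obtain ⟨N, hN⟩ := exists_nat_gt (1/α)
  filter_upwards [eventually_ge_atTop N] with k hk
  have hk1 : 1 ≤ (k:ℝ) * α + β := by
    have : 1/α < (k:ℝ) := lt_of_lt_of_le hN (by exact_mod_cast hk)
    rw [div_lt_iff₀ hα] at this
    linarith
  have hG := gamma_lower _ M hk1 hM
  have hGp : 0 < Real.Gamma (k*α+β) := Real.Gamma_pos_of_pos (by linarith)
  rw [Real.norm_of_nonneg (by positivity), div_le_iff₀ hGp]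
  have e1 : M ^ ((k:ℝ)*α+β-1) = (2*(R+1))^k * M ^ (β-1) := by
    rw [show (k:ℝ)*α+β-1 = α*k + (β-1) by ring, Real.rpow_add hM, Real.rpow_mul hM.le, hMα,
      Real.rpow_natCast]
  have e2 : M ^ (1-β) * M ^ (β-1) = 1 := by
    rw [← Real.rpow_add hM]; simp
  have e3 : Real.exp (M+1) * Real.exp (-(M+1)) = 1 := by
    rw [← Real.exp_add]; simp
  have e4 : (1/2:ℝ)^k * (2*(R+1))^k = (R+1)^k := by
    rw [← mul_pow]; congr 1; ring
  calc R^k ≤ (R+1)^k := by gcongr; linarith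
    _ = Real.exp (M+1) * M ^ (1-β) * (1/2)^k * (Real.exp (-(M+1)) * M ^ ((k:ℝ)*α+β-1)) := by
        rw [e1, ← e4]
        linear_combination -(M ^ (1-β) * M ^ (β-1)) * (1/2:ℝ)^k * (2*(R+1))^k * e3 - (1/2:ℝ)^k * (2*(R+1))^k * e2
    _ ≤ _ := by gcongr

lemma ml_summable' (α β z : ℝ) (hα : 0 < α) (hβ : 0 < β) :
    Summable (fun k : ℕ => z ^ k / Real.Gamma (k * α + β)) := by
  refine Summable.of_norm_bounded (ml_summable α β |z| hα hβ (abs_nonneg z)) fun k => ?_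
  have : 0 < Real.Gamma (k*α+β) := Real.Gamma_pos_of_pos (by positivity)
  rw [norm_div, Real.norm_of_nonneg this.le, norm_pow, Real.norm_eq_abs]

lemma ml_cont (α β : ℝ) (hα : 0 < α) (hβ : 0 < β) : Continuous (MLE α β) := by
  rw [continuous_iff_continuousAt]
  intro z
  have : ContinuousOn (MLE α β) (Metric.ball 0 (|z|+1)) := by
    refine continuousOn_tsum (fun k => by fun_prop) (ml_summable α β (|z|+1) hα hβ (by positivity)) ?_
    intro k x hx
    have hp : 0 < Real.Gamma (k*α+β) := Real.Gamma_pos_of_pos (by positivity)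
    rw [norm_div, Real.norm_of_nonneg hp.le, norm_pow]
    have : ‖x‖ ≤ |z|+1 := (mem_ball_zero_iff.1 hx).le
    gcongr
  exact this.continuousAt (Metric.isOpen_ball.mem_nhds (by simp))

lemma ml_rec (α β z : ℝ) (hα : 0 < α) (hβ : 0 < β) :
    MLE α β z = 1 / Real.Gamma β + z * MLE α (α + β) z := by
  unfold MLE
  rw [(ml_summable' α β z hα hβ).tsum_eq_zero_add, ← tsum_mul_left]
  congr 1
  · simp
  · congr 1
    ext k
    push_cast
    rw [show ((k:ℝ)+1)*α+β = k*α+(α+β) by ring]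
    ring

lemma real_beta (a b t : ℝ) (ha : 0 < a) (hb : 0 < b) (ht : 0 < t) :
    ∫ s in (0:ℝ)..t, (t-s)^(a-1) * s^(b-1) =
      Real.Gamma a * Real.Gamma b / Real.Gamma (a+b) * t^(a+b-1) := by
  have h := Complex.betaIntegral_scaled (b:ℂ) (a:ℂ) ht
  have h2 := Complex.Gamma_mul_Gamma_eq_betaIntegral (s := (b:ℂ)) (t := (a:ℂ)) (by simpa) (by simpa)
  have hG : 0 < Real.Gamma (a+b) := Real.Gamma_pos_of_pos (by positivity)
  have h3 : Complex.betaIntegral b a = ((Real.Gamma a * Real.Gamma b / Real.Gamma (a+b) : ℝ):ℂ) := by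
    rw [← Complex.ofReal_add, Complex.Gamma_ofReal, Complex.Gamma_ofReal, Complex.Gamma_ofReal, add_comm b a] at h2
    have : (Real.Gamma (a+b) : ℂ) ≠ 0 := by exact_mod_cast hG.ne'
    push_cast
    field_simp
    linear_combination -h2
  apply Complex.ofReal_injective
  rw [← intervalIntegral.integral_ofReal]
  trans ∫ x in (0:ℝ)..t, (x : ℂ) ^ ((b:ℂ) - 1) * ((t : ℂ) - x) ^ ((a:ℂ) - 1)
  · apply intervalIntegral.integral_congr
    intro s hs
    rw [uIcc_of_le ht.le] at hs
    simp only
    push_cast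
    rw [Complex.ofReal_cpow hs.1, Complex.ofReal_cpow (by linarith [hs.2])]
    push_cast
    ring
  · rw [h, h3, Complex.ofReal_mul, Complex.ofReal_cpow ht.le]
    push_cast
    rw [add_comm (b:ℂ) a]
    ring

lemma beta_int (a b t : ℝ) (ha : 0 < a) (hb : 0 < b) (ht : 0 < t) :
    IntervalIntegrable (fun s => (t-s)^(a-1) * s^(b-1)) volume 0 t := by
  apply intervalIntegral.intervalIntegrable_of_integral_ne_zero
  rw [real_beta a b t ha hb ht]
  have := Real.Gamma_pos_of_pos ha
  have := Real.Gamma_pos_of_pos hb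
  have := Real.Gamma_pos_of_pos (add_pos ha hb)
  positivity

lemma conv_int (α γ β t : ℝ) (hα : 0 < α) (hγ : 0 < γ) (hβ : 0 < β) (ht : 0 < t) :
    IntervalIntegrable (fun s => (t-s)^(γ-1) * (s^(β-1) * MLE α β (-s^α))) volume 0 t := by
  have h := (beta_int γ β t hγ hβ ht).mul_continuousOn (g := fun s => MLE α β (-s^α))
    ((ml_cont α β hα hβ).comp (Real.continuous_rpow_const hα.le).neg).continuousOn
  simpa only [mul_assoc] using h

lemma conv_eq (α γ β t : ℝ) (hα : 0 < α) (hγ : 0 < γ) (hβ : 0 < β) (ht : 0 < t) :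
    ∫ s in (0:ℝ)..t, (t-s)^(γ-1) * (s^(β-1) * MLE α β (-s^α)) =
      Real.Gamma γ * (t^(γ+β-1) * MLE α (γ+β) (-t^α)) := by
  have hGγ := Real.Gamma_pos_of_pos hγ
  have hGk : ∀ k : ℕ, 0 < Real.Gamma (k*α+β) := fun k => Real.Gamma_pos_of_pos (by positivity)
  have hGk' : ∀ k : ℕ, 0 < Real.Gamma (k*α+(γ+β)) := fun k => Real.Gamma_pos_of_pos (by positivity)
  set F : ℕ → ℝ → ℝ := fun k s => (-1)^k / Real.Gamma (k*α+β) * ((t-s)^(γ-1) * s^((k*α+β)-1)) with hF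
  have hFi : ∀ k, Integrable (F k) (volume.restrict (Ioc 0 t)) := fun k =>
    ((intervalIntegrable_iff_integrableOn_Ioc_of_le ht.le).1
      (beta_int γ (k*α+β) t hγ (by positivity) ht)).const_mul _
  have hpow : ∀ k : ℕ, t^(γ+(k*α+β)-1) = t^(γ+β-1) * (t^α)^k := fun k => by
    rw [show γ+(k*α+β)-1 = (γ+β-1) + α * k by ring, Real.rpow_add ht, Real.rpow_mul ht.le,
      Real.rpow_natCast]
  have hB : ∀ k : ℕ, ∫ s in Ioc 0 t, ((t-s)^(γ-1) * s^((k*α+β)-1)) =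
      Real.Gamma γ * Real.Gamma (k*α+β) / Real.Gamma (k*α+(γ+β)) * (t^(γ+β-1) * (t^α)^k) := fun k => by
    rw [← intervalIntegral.integral_of_le ht.le, real_beta γ (k*α+β) t hγ (by positivity) ht, hpow,
      show γ+(k*α+β) = k*α+(γ+β) by ring]
  have hFv : ∀ k, ∫ s in Ioc 0 t, F k s = 
      Real.Gamma γ * t^(γ+β-1) * ((-t^α)^k / Real.Gamma (k*α+(γ+β))) := fun k => by
    simp only [hF]
    rw [integral_const_mul, hB, neg_pow (t^α)]
    have := hGk k
    have := hGk' k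
    field_simp
  have hFn : ∀ k, ∫ s in Ioc 0 t, ‖F k s‖ = 
      Real.Gamma γ * t^(γ+β-1) * ((t^α)^k / Real.Gamma (k*α+(γ+β))) := fun k => by
    have : ∫ s in Ioc 0 t, ‖F k s‖ = ∫ s in Ioc 0 t, 1/Real.Gamma (k*α+β) * ((t-s)^(γ-1) * s^((k*α+β)-1)) := by
      apply setIntegral_congr_fun measurableSet_Ioc
      intro s hs
      have h1 : 0 ≤ (t-s)^(γ-1) := Real.rpow_nonneg (by linarith [hs.2]) _
      have h2 : 0 ≤ s^((k*α+β)-1) := Real.rpow_nonneg hs.1.le _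
      simp only [hF]
      rw [norm_mul, Real.norm_of_nonneg (mul_nonneg h1 h2), norm_div, Real.norm_of_nonneg (hGk k).le]
      simp
    rw [this, integral_const_mul, hB]
    have := hGk k
    have := hGk' k
    field_simp
  have key := hasSum_integral_of_summable_integral_norm hFi (by
    simp only [hFn]
    exact (ml_summable α (γ+β) (t^α) hα (by positivity) (by positivity)).mul_left _)
  have e := key.tsum_eq
  simp only [hFv] at e
  rw [tsum_mul_left] at e
  rw [intervalIntegral.integral_of_le ht.le]
  rw [← mul_assoc]
  unfold MLE
  rw [e]
  apply setIntegral_congr_fun measurableSet_Ioc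
  intro s hs
  simp only [hF]
  rw [← tsum_mul_left, ← tsum_mul_left]
  congr 1
  ext k
  rw [show k*α+β-1 = (β-1) + α * k by ring, Real.rpow_add hs.1, Real.rpow_mul hs.1.le,
      Real.rpow_natCast, neg_pow (s^α)]
  ring

lemma int_ker (α t T : ℝ) (hα : 0 < α) (htT : t ≤ T) :
    ∫ s in t..T, (T-s)^(α-1) = (T-t)^α/α := by
  rw [intervalIntegral.integral_comp_sub_left (fun u => u^(α-1)), integral_rpow (by left; linarith)]
  simp [Real.zero_rpow hα.ne']

lemma int_ker_int (α t T : ℝ) (hα : 0 < α) :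
    IntervalIntegrable (fun s => (T-s)^(α-1)) volume t T := by
  have := (intervalIntegral.intervalIntegrable_rpow' (a := T - t) (b := 0) (r := α-1)
    (by linarith)).comp_sub_left T
  simpa using this

lemma volterra (α t : ℝ) (hα : 0 < α) (ht : 0 < t) :
    t^(1-α) * ∫ s in (0:ℝ)..t, (t-s)^(α-1) * (s^(α-1) * MLE α α (-s^α)) =
      1 - Real.Gamma α * MLE α α (-t^α) := by
  rw [conv_eq α α α t hα hα hα ht, ml_rec α α (-t^α) hα hα]
  have hG := Real.Gamma_pos_of_pos hα
  have : t^(1-α) * t^(α+α-1) = t^α := by rw [← Real.rpow_add ht]; congr 1; ring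
  have h2 : Real.Gamma α * (1 / Real.Gamma α) = 1 := by field_simp
  generalize MLE α (α+α) (-t^α) = m
  generalize t^(α+α-1) = q at *
  linear_combination Real.Gamma α * m * this + h2

lemma y_pos (α : ℝ) (hα : 0 < α) (hα1 : α < 1) (T : ℝ) (hT : 0 ≤ T) :
    0 < MLE α α (-T^α) := by
  have hG := Real.Gamma_pos_of_pos hα
  set f : ℝ → ℝ := fun t => MLE α α (-t^α) with hf
  have hfc : Continuous f := (ml_cont α α hα hα).comp (Real.continuous_rpow_const hα.le).neg
  have hf0 : 0 < f 0 := by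
    simp only [hf, Real.zero_rpow hα.ne']
    rw [ml_rec α α _ hα hα]
    simpa using hG
  by_contra hcon
  have hcon' : f T ≤ 0 := not_lt.1 hcon
  -- least zero
  have hcomp : IsCompact (Icc 0 T ∩ f ⁻¹' Iic 0) :=
    isCompact_Icc.inter_right (isClosed_Iic.preimage hfc)
  obtain ⟨t0, ⟨⟨ht0a, ht0b⟩, ht0c⟩, hleast⟩ :=
    hcomp.exists_isLeast ⟨T, ⟨hT, le_rfl⟩, hcon'⟩
  have hft0 : f t0 ≤ 0 := ht0c
  have ht0 : 0 < t0 := by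
    rcases ht0a.lt_or_eq with h | h
    · exact h
    · rw [← h] at hft0; linarith
  have hpos : ∀ s, 0 ≤ s → s < t0 → 0 < f s := by
    intro s hs hst
    by_contra hc
    have := hleast ⟨⟨hs, by linarith⟩, not_lt.1 hc⟩
    linarith
  set δ1 : ℝ := (α * Real.Gamma α / 4)^(1/α) with hδ1
  have hδ1p : 0 < δ1 := by positivity
  have hδ1α : δ1^α = α * Real.Gamma α / 4 := by
    rw [hδ1, ← Real.rpow_mul (by positivity), one_div_mul_cancel hα.ne', Real.rpow_one]
  set δ := min (t0/2) δ1 with hδ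
  have hδp : 0 < δ := lt_min (by linarith) hδ1p
  have hδ2 : δ ≤ t0/2 := min_le_left _ _
  have hδ3 : δ^α ≤ α * Real.Gamma α / 4 := by
    rw [← hδ1α]; exact Real.rpow_le_rpow hδp.le (min_le_right _ _) hα.le
  obtain ⟨t, htm, htmax⟩ := (isCompact_Icc (a := t0-δ) (b := t0)).exists_isMaxOn
    ⟨t0, by constructor <;> linarith⟩ hfc.continuousOn
  have hft : 0 < f t := lt_of_lt_of_le (hpos (t0-δ) (by linarith) (by linarith))
    (htmax ⟨le_rfl, by linarith⟩)
  have htt0 : t < t0 := by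
    rcases htm.2.lt_or_eq with h | h
    · exact h
    · rw [h] at hft; linarith
  have ht : 0 < t := by linarith [htm.1]
  have hV0 := volterra α t0 hα ht0
  have hV := volterra α t hα ht
  have hi0 := conv_int α α α t0 hα hα hα ht0
  have hi := conv_int α α α t hα hα hα ht
  have hia : IntervalIntegrable (fun s => (t0-s)^(α-1) * (s^(α-1) * MLE α α (-s^α))) volume 0 t :=
    hi0.mono_set (by rw [uIcc_of_le ht.le, uIcc_of_le ht0.le]; exact Icc_subset_Icc le_rfl htt0.le)
  have hib : IntervalIntegrable (fun s => (t0-s)^(α-1) * (s^(α-1) * MLE α α (-s^α))) volume t t0 :=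
    hi0.mono_set (by rw [uIcc_of_le htt0.le, uIcc_of_le ht0.le]; exact Icc_subset_Icc ht.le le_rfl)
  have hsplit := intervalIntegral.integral_add_adjacent_intervals hia hib
  have hA : t0^(1-α) * ∫ s in (0:ℝ)..t, (t0-s)^(α-1) * (s^(α-1) * MLE α α (-s^α)) ≤
      t^(1-α) * ∫ s in (0:ℝ)..t, (t-s)^(α-1) * (s^(α-1) * MLE α α (-s^α)) := by
    rw [← intervalIntegral.integral_const_mul, ← intervalIntegral.integral_const_mul]
    apply intervalIntegral.integral_mono_on_of_le_Ioo ht.le (hia.const_mul _) (hi.const_mul _)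
    intro s hs
    have hfs : 0 < f s := hpos s hs.1.le (hs.2.trans htt0)
    have hs0 : 0 < s^(α-1) := Real.rpow_pos_of_pos hs.1 _
    rw [← mul_assoc, ← mul_assoc (t^(1-α))]
    apply mul_le_mul_of_nonneg_right _ (mul_pos hs0 hfs).le
    have hts : 0 < t - s := by linarith [hs.2]
    have hts0 : 0 < t0 - s := by linarith
    have e : ∀ x > 0, 0 < x - s → x^(1-α) * (x-s)^(α-1) = (x/(x-s))^(1-α) := by
      intro x hx hxs
      rw [Real.div_rpow hx.le hxs.le, show α - 1 = -(1-α) by ring, Real.rpow_neg hxs.le, div_eq_mul_inv]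
    rw [e t0 ht0 hts0, e t ht hts]
    apply Real.rpow_le_rpow (by positivity) _ (by linarith)
    rw [div_le_div_iff₀ hts0 hts]
    nlinarith [hs.1]
  have hB : ∫ s in t..t0, (t0-s)^(α-1) * (s^(α-1) * MLE α α (-s^α)) ≤
      ((t0/2)^(α-1) * f t) * ((t0-t)^α/α) := by
    rw [← int_ker α t t0 hα htt0.le, mul_comm, ← intervalIntegral.integral_mul_const]
    apply intervalIntegral.integral_mono_on_of_le_Ioo htt0.le hib
      ((int_ker_int α t t0 hα).mul_const _)
    intro s hs
    have hfs : 0 < f s := hpos s (by linarith [hs.1]) hs.2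
    have hfs' : f s ≤ f t := htmax ⟨by linarith [hs.1, htm.1], hs.2.le⟩
    have hsp : s^(α-1) ≤ (t0/2)^(α-1) :=
      Real.rpow_le_rpow_of_nonpos (by linarith) (by linarith [hs.1, htm.1]) (by linarith)
    have hk : 0 ≤ (t0-s)^(α-1) := Real.rpow_nonneg (by linarith [hs.2]) _
    apply mul_le_mul_of_nonneg_left _ hk
    exact mul_le_mul hsp hfs' hfs.le (by positivity)
  have hC : t0^(1-α) * (t0/2)^(α-1) ≤ 2 := by
    rw [show α - 1 = -(1-α) by ring, Real.rpow_neg (by positivity), ← div_eq_mul_inv,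
      ← Real.div_rpow ht0.le (by positivity)]
    rw [show t0/(t0/2) = 2 by field_simp]
    calc (2:ℝ)^(1-α) ≤ 2^(1:ℝ) := Real.rpow_le_rpow_of_exponent_le (by norm_num) (by linarith)
      _ = 2 := by simp
  have hD : (t0-t)^α/α ≤ Real.Gamma α / 4 := by
    rw [div_le_iff₀ hα]
    have : (t0-t)^α ≤ δ^α := Real.rpow_le_rpow (by linarith) (by linarith [htm.1]) hα.le
    linarith
  have hD0 : 0 ≤ (t0-t)^α/α := div_nonneg (Real.rpow_nonneg (by linarith) _) hα.le
  have hE : t0^(1-α) * ∫ s in t..t0, (t0-s)^(α-1) * (s^(α-1) * MLE α α (-s^α)) ≤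
      f t * (Real.Gamma α / 2) := by
    calc _ ≤ t0^(1-α) * (((t0/2)^(α-1) * f t) * ((t0-t)^α/α)) := by gcongr
      _ = (t0^(1-α) * (t0/2)^(α-1)) * f t * ((t0-t)^α/α) := by ring
      _ ≤ 2 * f t * (Real.Gamma α / 4) := by gcongr
      _ = _ := by ring
  rw [← hsplit, mul_add] at hV0
  have h1 : Real.Gamma α * f t0 ≤ 0 := mul_nonpos_of_nonneg_of_nonpos hG.le hft0
  have h2 : 0 < Real.Gamma α * f t := mul_pos hG hft
  simp only [hf] at h1 h2 hE
  linarith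

theorem mittagLeffler_sandwich (α : ℝ) (hα : α ∈ Set.Ioo (0 : ℝ) 1) :
    ∀ z : ℝ, 0 ≤ z →
      1 / (1 + Real.Gamma (1 - α) * z) ≤ mittagLeffler α (-z) ∧
      mittagLeffler α (-z) ≤ 1 / (1 + z / Real.Gamma (1 + α)) := by
  obtain ⟨ha, ha1⟩ := hα
  have ha' : 0 < 1 - α := by linarith
  intro z hz
  have hG := Real.Gamma_pos_of_pos ha
  have hG1 := Real.Gamma_pos_of_pos ha'
  have hG2 : Real.Gamma (1 + α) = α * Real.Gamma α := by
    rw [add_comm, Real.Gamma_add_one ha.ne']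
  have hm : mittagLeffler α (-z) = MLE α 1 (-z) := rfl
  rw [hm]
  rcases hz.eq_or_lt with rfl | hz
  · rw [ml_rec α 1 _ ha one_pos]; simp
  -- the function x(t) = 1 - ∫ y
  have hx : ∀ t, 0 < t → ∫ s in (0:ℝ)..t, (s^(α-1) * MLE α α (-s^α)) = 1 - MLE α 1 (-t^α) := by
    intro t ht
    have h := conv_eq α 1 α t ha one_pos ha ht
    have h2 := ml_rec α 1 (-t^α) ha one_pos
    simp only [sub_self, Real.rpow_zero, one_mul, Real.Gamma_one] at h
    rw [h, h2, add_comm 1 α, Real.Gamma_one]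
    simp
  have hyi : ∀ t, 0 < t → IntervalIntegrable (fun s => s^(α-1) * MLE α α (-s^α)) volume 0 t := by
    intro t ht
    have h := conv_int α 1 α t ha one_pos ha ht
    simpa only [sub_self, Real.rpow_zero, one_mul] using h
  have hy : ∀ s, 0 ≤ s → 0 ≤ s^(α-1) * MLE α α (-s^α) := fun s hs =>
    mul_nonneg (Real.rpow_nonneg hs _) (y_pos α ha ha1 s hs).le
  set t : ℝ := z^(1/α) with htdef
  have ht : 0 < t := by positivity
  have htα : t^α = z := by
    rw [htdef, ← Real.rpow_mul hz.le]
    field_simp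
    simp
  have hanti : ∀ s, 0 < s → s ≤ t → MLE α 1 (-t^α) ≤ MLE α 1 (-s^α) := by
    intro s hs hst
    have h1 := hx s hs
    have h2 := hx t ht
    have : ∫ s in (0:ℝ)..s, (s^(α-1) * MLE α α (-s^α)) ≤ ∫ s in (0:ℝ)..t, (s^(α-1) * MLE α α (-s^α)) := by
      apply intervalIntegral.integral_mono_interval le_rfl hs.le hst _ (hyi t ht)
      filter_upwards [ae_restrict_mem measurableSet_Ioc] with u hu
      exact hy u hu.1.le
    linarith
  constructor
  · rw [div_le_iff₀ (by positivity)]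
    have h := conv_eq α (1-α) α t ha ha' ha ht
    have e : (1 - α + α) = 1 := by ring
    rw [e] at h
    simp only [sub_self, Real.rpow_zero, one_mul] at h
    have hle : t^(-α) * ∫ s in (0:ℝ)..t, (s^(α-1) * MLE α α (-s^α)) ≤
        ∫ s in (0:ℝ)..t, (t-s)^(1-α-1) * (s^(α-1) * MLE α α (-s^α)) := by
      rw [← intervalIntegral.integral_const_mul]
      apply intervalIntegral.integral_mono_on_of_le_Ioo ht.le ((hyi t ht).const_mul _)
        (conv_int α (1-α) α t ha ha' ha ht)
      intro s hs
      apply mul_le_mul_of_nonneg_right _ (hy s hs.1.le)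
      rw [show 1 - α - 1 = -α by ring]
      exact Real.rpow_le_rpow_of_nonpos (by linarith [hs.2]) (by linarith [hs.1]) (by linarith)
    rw [h, hx t ht, Real.rpow_neg ht.le, htα, inv_mul_le_iff₀ hz] at hle
    linarith
  · rw [le_div_iff₀ (by rw [hG2]; positivity)]
    have h := conv_eq α α 1 t ha ha one_pos ht
    have hi := conv_int α α 1 t ha ha one_pos ht
    simp only [sub_self, Real.rpow_zero, one_mul, add_sub_cancel_right] at h hi
    have hr := ml_rec α 1 (-t^α) ha one_pos
    have hle : (t-0)^α/α * MLE α 1 (-t^α) ≤ ∫ s in (0:ℝ)..t, (t-s)^(α-1) * MLE α 1 (-s^α) := by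
      rw [← int_ker α 0 t ha ht.le, ← intervalIntegral.integral_mul_const]
      apply intervalIntegral.integral_mono_on_of_le_Ioo ht.le
        ((int_ker_int α 0 t ha).mul_const _) hi
      intro s hs
      exact mul_le_mul_of_nonneg_left (hanti s hs.1 hs.2.le)
        (Real.rpow_nonneg (by linarith [hs.2]) _)
    rw [h, sub_zero] at hle
    rw [htα] at hle hr
    rw [Real.Gamma_one] at hr
    rw [hG2]
    have h3 : z / (α * Real.Gamma α) * MLE α 1 (-z) ≤ z * MLE α (α+1) (-z) := by
      have : z / (α * Real.Gamma α) * MLE α 1 (-z) = (z/α * MLE α 1 (-z)) / Real.Gamma α := by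
        field_simp
      rw [this, div_le_iff₀ hG]
      linarith
    linarith
end

section
/- Let α ∈ (0,1), T > 0 and γ > 0. For any λ ≥ 0 and any t ∈ (0,T], with w(t,λ) := E_{α,1}(-λ t^α) one has w(t,λ)/(γ + w(T,λ)) ≤ min(γ^{-1}, c·t^{-α}), where c depends only on α and T. In particular the quantity is bounded by γ^{-1} using only 0 ≤ E_{α,1}(-z) ≤ 1. -/
open MeasureTheory Set Filter Topology

namespace MLaux

lemma beta_real {a b : ℝ} (ha : 0 < a) (hb : 0 < b) :
    IntegrableOn (fun x : ℝ => x ^ (a - 1) * (1 - x) ^ (b - 1)) (Ioo 0 1) ∧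
    ∫ x in Ioo (0:ℝ) 1, x ^ (a - 1) * (1 - x) ^ (b - 1)
      = Real.Gamma a * Real.Gamma b / Real.Gamma (a + b) := by
  have hc := Complex.betaIntegral_convergent (u := (a:ℂ)) (v := (b:ℂ)) (by simpa) (by simpa)
  rw [intervalIntegrable_iff_integrableOn_Ioo_of_le (by simp)] at hc
  have heq : EqOn (fun x : ℝ => ((x : ℂ) ^ ((a:ℂ) - 1) * (1 - (x : ℂ)) ^ ((b:ℂ) - 1)))
      (fun x : ℝ => ((x ^ (a - 1) * (1 - x) ^ (b - 1) : ℝ) : ℂ)) (Ioo 0 1) := by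
    intro x hx
    simp only
    rw [Complex.ofReal_mul, Complex.ofReal_cpow hx.1.le, Complex.ofReal_cpow (by linarith [hx.2])]
    push_cast
    rfl
  have hc2 := hc.congr_fun heq measurableSet_Ioo
  constructor
  · exact hc2.re
  · have h1 := ProbabilityTheory.beta_eq_betaIntegralReal a b ha hb
    rw [ProbabilityTheory.beta, Complex.betaIntegral, intervalIntegral.integral_of_le (by norm_num),
      integral_Ioc_eq_integral_Ioo, setIntegral_congr_fun measurableSet_Ioo heq,
      integral_complex_ofReal, Complex.ofReal_re] at h1
    exact h1.symm

lemma one_sub_rpow_le {b s : ℝ} (hb : 0 < b) (hs : 0 ≤ s) (hs1 : s ≤ 1) :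
    0 ≤ 1 - s ^ b ∧ 1 - s ^ b ≤ (b + 1) * (1 - s) := by
  refine ⟨by linarith [Real.rpow_le_one hs hs1 hb.le], ?_⟩
  rcases le_total 1 b with h | h
  · have := one_add_mul_self_le_rpow_one_add (s := s - 1) (by linarith) h
    rw [show 1 + (s - 1) = s by ring] at this
    nlinarith
  · have := Real.rpow_le_rpow_of_exponent_ge' hs hs1 hb.le h
    rw [Real.rpow_one] at this
    nlinarith

lemma kernel_integral {α b : ℝ} (hα : α ∈ Ioo (0:ℝ) 1) (hb : 0 < b) :
    IntegrableOn (fun s : ℝ => (1 - s ^ b) * (1 - s) ^ (-α - 1)) (Ioo 0 1) ∧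
    α * ∫ s in Ioo (0:ℝ) 1, (1 - s ^ b) * (1 - s) ^ (-α - 1)
      = Real.Gamma (1 - α) * Real.Gamma (b + 1) / Real.Gamma (b + 1 - α) - 1 := by
  obtain ⟨h0, h1⟩ := hα
  have hdom : IntegrableOn (fun s : ℝ => (b + 1) * (s ^ ((1:ℝ) - 1) * (1 - s) ^ ((1 - α) - 1)))
      (Ioo 0 1) := (beta_real one_pos (by linarith : 0 < 1 - α)).1.const_mul _
  have hint : IntegrableOn (fun s : ℝ => (1 - s ^ b) * (1 - s) ^ (-α - 1)) (Ioo 0 1) := by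
    refine Integrable.mono' hdom (Measurable.aestronglyMeasurable (by fun_prop)) ?_
    refine ae_restrict_of_forall_mem measurableSet_Ioo (fun s hs => ?_)
    obtain ⟨p, q⟩ := one_sub_rpow_le hb hs.1.le hs.2.le
    have hp : 0 < 1 - s := by linarith [hs.2]
    have hpp := Real.rpow_pos_of_pos hp (-α - 1)
    rw [Real.norm_of_nonneg (mul_nonneg p hpp.le)]
    have e : (1 - s) ^ ((1 - α) - 1) = (1 - s) * (1 - s) ^ (-α - 1) := by
      rw [show (1 - α) - 1 = 1 + (-α - 1) by ring, Real.rpow_add hp, Real.rpow_one]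
    simp only [sub_self, Real.rpow_zero, one_mul]
    rw [e, ← mul_assoc]
    exact mul_le_mul_of_nonneg_right q hpp.le
  refine ⟨hint, ?_⟩
  obtain ⟨bi, be⟩ := beta_real hb (by linarith : 0 < 1 - α)
  set G : ℝ → ℝ := fun s => (1 - s ^ b) * (1 - s) ^ (-α)
  have hder : ∀ s ∈ Ioo (0:ℝ) 1, HasDerivAt G
      (α * ((1 - s ^ b) * (1 - s) ^ (-α - 1)) - b * (s ^ (b - 1) * (1 - s) ^ ((1 - α) - 1))) s := by
    intro s hs
    have d1 : HasDerivAt (fun s : ℝ => 1 - s ^ b) (-(b * s ^ (b - 1))) s := by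
      have := (Real.hasDerivAt_rpow_const (x := s) (p := b) (Or.inl hs.1.ne')).const_sub 1
      simpa using this
    have d2 : HasDerivAt (fun s : ℝ => (1 - s) ^ (-α)) (α * (1 - s) ^ (-α - 1)) s := by
      have := ((hasDerivAt_id s).const_sub 1).rpow_const (p := -α)
        (Or.inl (by simp only [id]; linarith [hs.2]))
      simpa using this
    refine (d1.mul d2).congr_deriv ?_
    rw [show (1 - α) - 1 = -α by ring]
    ring
  have hcont : ContinuousOn G (Icc 0 1) := by
    intro s hs
    rcases eq_or_lt_of_le hs.2 with h | h
    · subst h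
      have hG1 : G 1 = 0 := by simp [G]
      rw [ContinuousWithinAt, hG1]
      have hlim : Tendsto (fun s : ℝ => (b + 1) * (1 - s) ^ (1 - α)) (𝓝[Icc 0 1] 1) (𝓝 0) := by
        have : ContinuousAt (fun s : ℝ => (b + 1) * (1 - s) ^ (1 - α)) 1 := by
          refine continuousAt_const.mul (ContinuousAt.rpow_const (by fun_prop) (Or.inr (by linarith)))
        have h2 := this.tendsto
        simp only [sub_self, Real.zero_rpow (by linarith : 1 - α ≠ 0), mul_zero] at h2
        exact h2.mono_left nhdsWithin_le_nhds
      refine squeeze_zero' ?_ ?_ hlim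
      · filter_upwards [self_mem_nhdsWithin] with s hs
        exact mul_nonneg (one_sub_rpow_le hb hs.1 hs.2).1
          (Real.rpow_nonneg (by linarith [hs.2]) _)
      · filter_upwards [self_mem_nhdsWithin] with s hs
        rcases eq_or_lt_of_le hs.2 with h | h
        · subst h; simp [G, Real.zero_rpow (by linarith : 1 - α ≠ 0)]
        have hp : 0 < 1 - s := by linarith
        rw [show 1 - α = 1 + (-α) by ring, Real.rpow_add hp, Real.rpow_one, ← mul_assoc]
        exact mul_le_mul_of_nonneg_right (one_sub_rpow_le hb hs.1 hs.2).2
          (Real.rpow_nonneg hp.le _)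
    · refine ContinuousAt.continuousWithinAt ?_
      refine ContinuousAt.mul (continuousAt_const.sub ?_) ?_
      · exact Real.continuousAt_rpow_const _ _ (Or.inr hb.le)
      · exact ContinuousAt.rpow_const (by fun_prop) (Or.inl (by linarith))
  have hii : IntegrableOn (fun s : ℝ => α * ((1 - s ^ b) * (1 - s) ^ (-α - 1))
      - b * (s ^ (b - 1) * (1 - s) ^ ((1 - α) - 1))) (Ioo 0 1) :=
    (hint.const_mul α).sub (bi.const_mul b)
  have ftc := intervalIntegral.integral_eq_sub_of_hasDerivAt_of_le zero_le_one hcont hder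
    ((intervalIntegrable_iff_integrableOn_Ioo_of_le zero_le_one).2 hii)
  rw [intervalIntegral.integral_of_le zero_le_one, integral_Ioc_eq_integral_Ioo,
    integral_sub (hint.const_mul α) (bi.const_mul b), integral_const_mul, integral_const_mul, be]
    at ftc
  have g0 : G 0 = 1 := by simp [G, Real.zero_rpow hb.ne']
  have g1 : G 1 = 0 := by simp [G]
  rw [g0, g1] at ftc
  rw [Real.Gamma_add_one hb.ne', show b + 1 - α = b + (1 - α) by ring]
  have : Real.Gamma (1 - α) * (b * Real.Gamma b) / Real.Gamma (b + (1 - α)) =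
    b * (Real.Gamma b * Real.Gamma (1 - α) / Real.Gamma (b + (1 - α))) := by ring
  rw [this]
  linarith

lemma Gamma_lower {R x : ℝ} (hR : 0 < R) (hx : 0 ≤ x) :
    R ^ x * Real.exp (-R) ≤ Real.Gamma (x + 1) := by
  rw [Real.Gamma_eq_integral (by linarith), ← integral_exp_neg_Ioi, ← integral_const_mul]
  have hi := Real.GammaIntegral_convergent (s := x + 1) (by linarith)
  have hsub : Ioi R ⊆ Ioi (0:ℝ) := Ioi_subset_Ioi hR.le
  refine le_trans ?_ (setIntegral_mono_set hi ?_ (Eventually.of_forall hsub))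
  · refine setIntegral_mono_on ((integrableOn_exp_neg_Ioi R).const_mul _) (hi.mono_set hsub)
      measurableSet_Ioi (fun t ht => ?_)
    rw [mul_comm, add_sub_cancel_right]
    exact mul_le_mul_of_nonneg_left (Real.rpow_le_rpow hR.le (le_of_lt ht) hx) (Real.exp_pos _).le
  · refine ae_restrict_of_forall_mem measurableSet_Ioi (fun t ht => ?_)
    exact mul_nonneg (Real.exp_pos _).le (Real.rpow_nonneg (le_of_lt ht) _)

lemma Gpos {α : ℝ} (hα : 0 < α) (k : ℕ) : 0 < Real.Gamma (k * α + 1) :=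
  Real.Gamma_pos_of_pos (by positivity)

lemma summ {α : ℝ} (hα : 0 < α) {z : ℝ} (hz : 0 ≤ z) :
    Summable (fun k : ℕ => z ^ k / Real.Gamma (k * α + 1)) := by
  set S : ℝ := 2 * z + 1
  have hS : 0 < S := by positivity
  have hR : 0 < S ^ (1 / α) := Real.rpow_pos_of_pos hS _
  refine Summable.of_nonneg_of_le (fun k => div_nonneg (by positivity) (Gpos hα k).le)
    (fun k => ?_) ((summable_geometric_of_lt_one (r := z / S) (by positivity)
      (by rw [div_lt_one hS]; simp only [S]; linarith)).mul_left (Real.exp (S ^ (1 / α))))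
  have h := Gamma_lower hR (x := k * α) (by positivity)
  rw [← Real.rpow_mul hS.le, show 1 / α * (k * α) = k by field_simp, Real.rpow_natCast,
    Real.exp_neg] at h
  rw [div_le_iff₀ (Gpos hα k)]
  calc z ^ k = Real.exp (S ^ (1 / α)) * (z / S) ^ k * (S ^ k * (Real.exp (S ^ (1 / α)))⁻¹) := by
        rw [div_pow]; field_simp
    _ ≤ _ := mul_le_mul_of_nonneg_left h (by positivity)

lemma summ_b {α : ℝ} (hα : 0 < α) {z C : ℝ} (hz : 0 ≤ z) {b : ℕ → ℝ}
    (hb : ∀ k, |b k| ≤ C * z ^ k) :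
    Summable (fun k : ℕ => b k / Real.Gamma (k * α + 1)) := by
  refine Summable.of_norm_bounded ((summ hα hz).mul_left C) (fun k => ?_)
  rw [norm_div, Real.norm_of_nonneg (Gpos hα k).le, ← mul_div_assoc]
  exact div_le_div_of_nonneg_right (hb k) (Gpos hα k).le

/-- Minimum principle for series in `s ^ α`. -/
lemma min_principle {α : ℝ} (hα : α ∈ Ioo (0:ℝ) 1) {z C : ℝ} (hz : 0 ≤ z) {b : ℕ → ℝ}
    (hb : ∀ k, |b k| ≤ C * z ^ k)
    (hmin : ∀ s ∈ Ioo (0:ℝ) 1, ∑' k : ℕ, b k / Real.Gamma (k * α + 1)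
      ≤ ∑' k : ℕ, b k * (s ^ α) ^ k / Real.Gamma (k * α + 1)) :
    Real.Gamma (1 - α) * ∑' k : ℕ, b (k + 1) / Real.Gamma (k * α + 1)
      ≤ ∑' k : ℕ, b k / Real.Gamma (k * α + 1) - b 0 := by
  have h0 := hα.1
  have hs1 := summ_b h0 hz hb
  have hb' : ∀ k, |b (k + 1)| ≤ (C * z) * z ^ k := fun k => by
    have := hb (k + 1); rw [pow_succ] at this; linarith
  have hs2 := summ_b h0 hz hb'
  have hs1' := (summable_nat_add_iff 1).2 hs1
  set G : ℕ → ℝ := fun k => Real.Gamma (k * α + 1)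
  have hG : ∀ k, 0 < G k := Gpos h0
  set I : ℕ → ℝ := fun k => ∫ s in Ioo (0:ℝ) 1, (1 - s ^ ((k + 1 : ℕ) * α)) * (1 - s) ^ (-α - 1)
  have hpos : ∀ k : ℕ, (0:ℝ) < (k + 1 : ℕ) * α := fun k => by positivity
  have hI : ∀ k, α * I k = Real.Gamma (1 - α) * G (k + 1) / G k - 1 := fun k => by
    have := (kernel_integral hα (hpos k)).2
    rw [show ((k + 1 : ℕ) : ℝ) * α + 1 - α = k * α + 1 by push_cast; ring] at this
    exact this
  have hInn : ∀ k, 0 ≤ I k := fun k => by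
    refine setIntegral_nonneg measurableSet_Ioo (fun s hs => ?_)
    exact mul_nonneg (one_sub_rpow_le (hpos k) hs.1.le hs.2.le).1
      (Real.rpow_nonneg (by linarith [hs.2]) _)
  set F : ℕ → ℝ → ℝ := fun k s =>
    b (k + 1) / G (k + 1) * ((1 - s ^ ((k + 1 : ℕ) * α)) * (1 - s) ^ (-α - 1))
  have hFi : ∀ k, Integrable (F k) (volume.restrict (Ioo 0 1)) := fun k =>
    (kernel_integral hα (hpos k)).1.const_mul _
  have hterm : ∀ k, b (k + 1) / G (k + 1) * I k
      = α⁻¹ * (Real.Gamma (1 - α) * (b (k + 1) / G k) - b (k + 1) / G (k + 1)) := fun k => by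
    have e : I k = α⁻¹ * (Real.Gamma (1 - α) * G (k + 1) / G k - 1) := by
      rw [← hI k]; field_simp
    rw [e]
    have := (hG k).ne'
    have := (hG (k + 1)).ne'
    field_simp
  have hsumm : Summable (fun k => b (k + 1) / G (k + 1) * I k) := by
    simp_rw [hterm]
    exact ((hs2.mul_left _).sub hs1').mul_left _
  have hFn : Summable fun k => ∫ s in Ioo (0:ℝ) 1, ‖F k s‖ := by
    refine hsumm.norm.congr (fun k => ?_)
    rw [norm_mul, Real.norm_of_nonneg (hInn k), ← integral_const_mul]
    refine setIntegral_congr_fun measurableSet_Ioo (fun s hs => ?_)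
    simp only [F]
    rw [norm_mul, Real.norm_of_nonneg (mul_nonneg (one_sub_rpow_le (hpos k) hs.1.le hs.2.le).1
      (Real.rpow_nonneg (by linarith [hs.2]) _))]
  have hS := hasSum_integral_of_summable_integral_norm hFi hFn
  have hle : ∫ s in Ioo (0:ℝ) 1, ∑' k, F k s ≤ 0 := by
    refine setIntegral_nonpos measurableSet_Ioo (fun s hs => ?_)
    have hm := hmin s hs
    have hsa : 0 ≤ s ^ α := Real.rpow_nonneg hs.1.le _
    have hsa1 : s ^ α ≤ 1 := Real.rpow_le_one hs.1.le hs.2.le h0.le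
    have hs3 : Summable (fun k : ℕ => b k * (s ^ α) ^ k / G k) := by
      refine summ_b h0 hz (C := C) (fun k => ?_)
      rw [abs_mul, abs_of_nonneg (pow_nonneg hsa k)]
      exact (mul_le_of_le_one_right (abs_nonneg _) (pow_le_one₀ hsa hsa1)).trans (hb k)
    have hs3' := (summable_nat_add_iff 1).2 hs3
    have e1 : ∀ k, F k s = (b (k + 1) / G (k + 1) - b (k + 1) * (s ^ α) ^ (k + 1) / G (k + 1))
        * (1 - s) ^ (-α - 1) := fun k => by
      simp only [F]
      rw [mul_comm ((k + 1 : ℕ) : ℝ) α, Real.rpow_mul hs.1.le, Real.rpow_natCast]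
      ring
    simp_rw [e1]
    rw [tsum_mul_right]
    refine mul_nonpos_of_nonpos_of_nonneg ?_ (Real.rpow_nonneg (by linarith [hs.2]) _)
    rw [hs1'.tsum_sub hs3']
    change ∑' k, b k / G k ≤ ∑' k, b k * (s ^ α) ^ k / G k at hm
    rw [hs1.tsum_eq_zero_add, hs3.tsum_eq_zero_add] at hm
    simp only [pow_zero, mul_one] at hm
    exact sub_nonpos.2 (le_of_add_le_add_left hm)
  have hS2 := hS.tsum_eq
  have e2 : ∀ k, ∫ s in Ioo (0:ℝ) 1, F k s = b (k + 1) / G (k + 1) * I k := fun k => by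
    simp only [F, I]; rw [integral_const_mul]
  simp_rw [e2, hterm] at hS2
  rw [tsum_mul_left, (hs2.mul_left _).tsum_sub hs1', tsum_mul_left] at hS2
  rw [← hS2] at hle
  have hle2 := nonpos_of_mul_nonpos_right hle (inv_pos.2 h0)
  rw [hs1.tsum_eq_zero_add]
  simp only [Nat.cast_zero, zero_mul, zero_add, Real.Gamma_one, div_one]
  change _ ≤ b 0 + ∑' k, b (k + 1) / G (k + 1) - b 0
  linarith

lemma ml_cont {α : ℝ} (hα : 0 < α) (Z : ℝ) :
    ContinuousOn (fun z => mittagLeffler α (-z)) (Icc 0 Z) := by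
  unfold mittagLeffler
  rcases lt_or_ge Z 0 with h | h
  · rw [Icc_eq_empty (by linarith)]; exact continuousOn_empty _
  refine continuousOn_tsum (fun k => by fun_prop) (summ hα h) (fun k x hx => ?_)
  rw [norm_div, Real.norm_of_nonneg (Gpos hα k).le, norm_pow, norm_neg, Real.norm_of_nonneg hx.1]
  exact div_le_div_of_nonneg_right (pow_le_pow_left₀ hx.1 hx.2 k) (Gpos hα k).le

lemma ml_zero (α : ℝ) : mittagLeffler α (-0) = 1 := by
  unfold mittagLeffler
  rw [tsum_eq_single 0 (fun k hk => by simp [hk])]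
  simp

lemma ml_shift (α z : ℝ) : ∑' k : ℕ, (-z) ^ (k + 1) / Real.Gamma (k * α + 1)
    = -z * mittagLeffler α (-z) := by
  unfold mittagLeffler
  rw [← tsum_mul_left]
  congr 1; ext k; ring

lemma ml_lower {α : ℝ} (hα : α ∈ Ioo (0:ℝ) 1) {Z : ℝ} (hZ : 0 ≤ Z) :
    1 / (1 + Real.Gamma (1 - α) * Z) ≤ mittagLeffler α (-Z) := by
  have hg : 0 < Real.Gamma (1 - α) := Real.Gamma_pos_of_pos (by linarith [hα.2])
  obtain ⟨z, hz, hmin⟩ := isCompact_Icc.exists_isMinOn ⟨0, left_mem_Icc.2 hZ⟩ (ml_cont hα.1 Z)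
  have h := min_principle hα (z := z) (C := 1) (b := fun k => (-z) ^ k) hz.1
    (fun k => by rw [abs_pow, abs_neg, abs_of_nonneg hz.1, one_mul]) (fun s hs => by
      have hsa : 0 ≤ s ^ α := Real.rpow_nonneg hs.1.le _
      have hsa1 : s ^ α ≤ 1 := Real.rpow_le_one hs.1.le hs.2.le hα.1.le
      have := hmin (a := z * s ^ α) ⟨mul_nonneg hz.1 hsa,
        (mul_le_of_le_one_right hz.1 hsa1).trans hz.2⟩
      simp only [mem_ofPred_eq, mittagLeffler, ← neg_mul, mul_pow] at this
      exact this)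
  rw [ml_shift] at h
  change _ ≤ mittagLeffler α (-z) - _ at h
  rw [pow_zero] at h
  have hZm := hmin (a := Z) (right_mem_Icc.2 hZ)
  simp only [mem_ofPred_eq] at hZm
  refine le_trans ?_ hZm
  have hp : 0 < 1 + Real.Gamma (1 - α) * z := by have := mul_nonneg hg.le hz.1; linarith
  calc 1 / (1 + Real.Gamma (1 - α) * Z) ≤ 1 / (1 + Real.Gamma (1 - α) * z) :=
        one_div_le_one_div_of_le hp (by have := mul_le_mul_of_nonneg_left hz.2 hg.le; linarith)
    _ ≤ _ := by rw [div_le_iff₀ hp]; linarith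

lemma ml_pos {α : ℝ} (hα : α ∈ Ioo (0:ℝ) 1) {Z : ℝ} (hZ : 0 ≤ Z) :
    0 < mittagLeffler α (-Z) := by
  have hg : 0 < Real.Gamma (1 - α) := Real.Gamma_pos_of_pos (by linarith [hα.2])
  exact lt_of_lt_of_le (by positivity) (ml_lower hα hZ)

lemma ml_anti {α : ℝ} (hα : α ∈ Ioo (0:ℝ) 1) {l m : ℝ} (hl : 0 ≤ l) (hlm : l ≤ m) :
    mittagLeffler α (-m) ≤ mittagLeffler α (-l) := by
  have hm : 0 ≤ m := hl.trans hlm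
  have hg : 0 < Real.Gamma (1 - α) := Real.Gamma_pos_of_pos (by linarith [hα.2])
  have hc : ∀ q, 0 ≤ q → ContinuousOn (fun x => mittagLeffler α (-(q * x))) (Icc 0 1) := by
    intro q hq
    exact (ml_cont hα.1 q).comp (f := fun x => q * x) (by fun_prop)
      (fun x hx => ⟨mul_nonneg hq hx.1, mul_le_of_le_one_right hq hx.2⟩)
  obtain ⟨x, hx, hmin⟩ := isCompact_Icc.exists_isMinOn ⟨(0:ℝ), left_mem_Icc.2 zero_le_one⟩
    ((hc l hl).sub (hc m hm))
  have hlx : 0 ≤ l * x := mul_nonneg hl hx.1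
  have hmx : 0 ≤ m * x := mul_nonneg hm hx.1
  have hlmx : l * x ≤ m * x := mul_le_mul_of_nonneg_right hlm hx.1
  have sg : ∀ q, 0 ≤ q → Summable (fun k : ℕ => (-q) ^ k / Real.Gamma (k * α + 1)) := fun q hq =>
    summ_b hα.1 hq (C := 1) (fun k => by rw [abs_pow, abs_neg, abs_of_nonneg hq, one_mul])
  have sg' : ∀ q, 0 ≤ q → Summable (fun k : ℕ => (-q) ^ (k + 1) / Real.Gamma (k * α + 1)) :=
    fun q hq => summ_b hα.1 hq (C := q)
      (fun k => by rw [abs_pow, abs_neg, abs_of_nonneg hq, pow_succ, mul_comm])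
  have h := min_principle hα (z := m * x) (C := 2) (b := fun k => (-(l * x)) ^ k - (-(m * x)) ^ k)
    hmx (fun k => by
      refine (abs_sub _ _).trans ?_
      rw [abs_pow, abs_neg, abs_of_nonneg hlx, abs_pow, abs_neg, abs_of_nonneg hmx]
      have := pow_le_pow_left₀ hlx hlmx k
      linarith) (fun s hs => by
      have hsa : 0 ≤ s ^ α := Real.rpow_nonneg hs.1.le _
      have hsa1 : s ^ α ≤ 1 := Real.rpow_le_one hs.1.le hs.2.le hα.1.le
      have := hmin (a := x * s ^ α) ⟨mul_nonneg hx.1 hsa,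
        (mul_le_of_le_one_right hx.1 hsa1).trans hx.2⟩
      simp only [mem_ofPred_eq, mittagLeffler, Pi.sub_apply] at this
      rw [← (sg _ hlx).tsum_sub (sg _ hmx), ← (sg _ (mul_nonneg hl (mul_nonneg hx.1 hsa))).tsum_sub
        (sg _ (mul_nonneg hm (mul_nonneg hx.1 hsa)))] at this
      refine le_of_eq_of_le ?_ (this.trans_eq ?_)
      · congr 1; ext k; ring
      · congr 1; ext k
        rw [show -(l * (x * s ^ α)) = -(l * x) * s ^ α by ring,
          show -(m * (x * s ^ α)) = -(m * x) * s ^ α by ring, mul_pow, mul_pow]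
        ring)
  simp only [sub_div, pow_zero, sub_self, sub_zero] at h
  rw [(sg' _ hlx).tsum_sub (sg' _ hmx), (sg _ hlx).tsum_sub (sg _ hmx), ml_shift, ml_shift] at h
  change _ ≤ mittagLeffler α (-(l * x)) - mittagLeffler α (-(m * x)) at h
  have h1 := hmin (a := 1) (right_mem_Icc.2 zero_le_one)
  simp only [mem_ofPred_eq, Pi.sub_apply, mul_one] at h1
  have hp := ml_pos hα hmx
  set A := mittagLeffler α (-(l * x))
  set B := mittagLeffler α (-(m * x))
  set g := Real.Gamma (1 - α)
  have h2 : 0 ≤ g * ((m * x - l * x) * B) :=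
    mul_nonneg hg.le (mul_nonneg (by linarith) hp.le)
  have h3 : 0 ≤ (A - B) * (1 + g * (l * x)) := by nlinarith
  have h4 : 0 ≤ A - B := nonneg_of_mul_nonneg_left h3 (by have := mul_nonneg hg.le hlx; linarith)
  linarith

lemma ml_upper {α : ℝ} (hα : α ∈ Ioo (0:ℝ) 1) {z : ℝ} (hz : 0 ≤ z) :
    mittagLeffler α (-z) * (1 + z / Real.Gamma (α + 1)) ≤ 1 := by
  have h0 := hα.1
  have hga : 0 < Real.Gamma α := Real.Gamma_pos_of_pos h0
  set G : ℕ → ℝ := fun k => Real.Gamma (k * α + 1)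
  have hG : ∀ k, 0 < G k := Gpos h0
  have sg : ∀ q, 0 ≤ q → Summable (fun k : ℕ => (-q) ^ k / G k) := fun q hq =>
    summ_b hα.1 hq (C := 1) (fun k => by rw [abs_pow, abs_neg, abs_of_nonneg hq, one_mul])
  rcases eq_or_lt_of_le hz with h | hzp
  · subst h; rw [ml_zero]; simp
  have hs' := (summable_nat_add_iff 1).2 (sg z hz)
  have hE : mittagLeffler α (-z) = 1 + ∑' k, (-z) ^ (k + 1) / G (k + 1) := by
    unfold mittagLeffler
    change ∑' k, (-z) ^ k / G k = _
    rw [(sg z hz).tsum_eq_zero_add]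
    simp [G]
  have hB : ∀ k : ℕ, IntegrableOn (fun s : ℝ => s ^ (k * α) * (1 - s) ^ (α - 1)) (Ioo 0 1) ∧
      ∫ s in Ioo (0:ℝ) 1, s ^ (k * α) * (1 - s) ^ (α - 1)
        = Real.Gamma α * (G k / G (k + 1)) := fun k => by
    have := beta_real (a := k * α + 1) (b := α) (by positivity) h0
    simp only [add_sub_cancel_right] at this
    refine ⟨this.1, this.2.trans ?_⟩
    rw [show (k * α + 1 + α) = ((k + 1 : ℕ) : ℝ) * α + 1 by push_cast; ring]
    simp only [G]; ring
  have h00 := hB 0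
  simp only [Nat.cast_zero, zero_mul, Real.rpow_zero, one_mul, zero_add] at h00
  have hG0 : G 0 = 1 := by simp [G]
  have hG1 : G 1 = α * Real.Gamma α := by simp [G, Real.Gamma_add_one h0.ne']
  have hk0 : ∫ s in Ioo (0:ℝ) 1, (1 - s) ^ (α - 1) = α⁻¹ := by
    rw [h00.2, hG0, hG1]; field_simp
  set F : ℕ → ℝ → ℝ := fun k s =>
    (-z) ^ k / G k * ((1 - s) ^ (α - 1) - s ^ (k * α) * (1 - s) ^ (α - 1))
  have hFi : ∀ k, Integrable (F k) (volume.restrict (Ioo 0 1)) := fun k =>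
    (h00.1.sub (hB k).1).const_mul _
  have hnn : ∀ k : ℕ, ∀ s ∈ Ioo (0:ℝ) 1,
      0 ≤ (1 - s) ^ (α - 1) - s ^ (k * α) * (1 - s) ^ (α - 1) := fun k s hs => by
    have h1 : s ^ (k * α) ≤ 1 := Real.rpow_le_one hs.1.le hs.2.le (by positivity)
    have h2 : 0 ≤ (1 - s) ^ (α - 1) := Real.rpow_nonneg (by linarith [hs.2]) _
    nlinarith
  set I : ℕ → ℝ := fun k =>
    ∫ s in Ioo (0:ℝ) 1, ((1 - s) ^ (α - 1) - s ^ (k * α) * (1 - s) ^ (α - 1))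
  have hI : ∀ k, I k = α⁻¹ - Real.Gamma α * (G k / G (k + 1)) := fun k => by
    simp only [I]; rw [integral_sub h00.1 (hB k).1, hk0, (hB k).2]
  have hInn : ∀ k, 0 ≤ I k := fun k => setIntegral_nonneg measurableSet_Ioo (hnn k)
  have hterm : ∀ k, (-z) ^ k / G k * I k
      = α⁻¹ * ((-z) ^ k / G k) + Real.Gamma α / z * ((-z) ^ (k + 1) / G (k + 1)) := fun k => by
    rw [hI]
    have := (hG k).ne'
    have := (hG (k + 1)).ne'
    rw [pow_succ]
    field_simp
    ring
  have hsumm : Summable (fun k => (-z) ^ k / G k * I k) := by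
    simp_rw [hterm]
    exact ((sg z hz).mul_left _).add (hs'.mul_left _)
  have hFn : Summable fun k => ∫ s in Ioo (0:ℝ) 1, ‖F k s‖ := by
    refine hsumm.norm.congr (fun k => ?_)
    rw [norm_mul, Real.norm_of_nonneg (hInn k), ← integral_const_mul]
    refine setIntegral_congr_fun measurableSet_Ioo (fun s hs => ?_)
    simp only [F]
    rw [norm_mul, Real.norm_of_nonneg (hnn k s hs)]
  have hS := hasSum_integral_of_summable_integral_norm hFi hFn
  have hle : ∫ s in Ioo (0:ℝ) 1, ∑' k, F k s ≤ 0 := by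
    refine setIntegral_nonpos measurableSet_Ioo (fun s hs => ?_)
    have hsa : 0 ≤ s ^ α := Real.rpow_nonneg hs.1.le _
    have hsa1 : s ^ α ≤ 1 := Real.rpow_le_one hs.1.le hs.2.le h0.le
    have hzs : 0 ≤ z * s ^ α := mul_nonneg hz hsa
    have hm := ml_anti hα hzs (mul_le_of_le_one_right hz hsa1)
    have e1 : ∀ k, F k s = ((-z) ^ k / G k - (-(z * s ^ α)) ^ k / G k)
        * (1 - s) ^ (α - 1) := fun k => by
      simp only [F]
      rw [mul_comm (k : ℝ) α, Real.rpow_mul hs.1.le, Real.rpow_natCast, ← neg_mul, mul_pow]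
      ring
    simp_rw [e1]
    rw [tsum_mul_right]
    refine mul_nonpos_of_nonpos_of_nonneg ?_ (Real.rpow_nonneg (by linarith [hs.2]) _)
    rw [(sg z hz).tsum_sub (sg _ hzs)]
    exact sub_nonpos.2 hm
  have hS2 := hS.tsum_eq
  have e2 : ∀ k, ∫ s in Ioo (0:ℝ) 1, F k s = (-z) ^ k / G k * I k := fun k => by
    simp only [F, I]; rw [integral_const_mul]
  simp_rw [e2, hterm] at hS2
  rw [((sg z hz).mul_left _).tsum_add (hs'.mul_left _), tsum_mul_left, tsum_mul_left] at hS2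
  rw [← hS2] at hle
  change α⁻¹ * mittagLeffler α (-z) + _ ≤ 0 at hle
  have hT : ∑' k, (-z) ^ (k + 1) / G (k + 1) = mittagLeffler α (-z) - 1 := by rw [hE]; ring
  rw [hT] at hle
  rw [Real.Gamma_add_one h0.ne']
  have h5 := mul_nonpos_of_nonneg_of_nonpos (div_nonneg hz hga.le) hle
  have h6 : z / Real.Gamma α * (α⁻¹ * mittagLeffler α (-z)
      + Real.Gamma α / z * (mittagLeffler α (-z) - 1))
      = mittagLeffler α (-z) * (1 + z / (α * Real.Gamma α)) - 1 := by
    field_simp; ring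
  linarith

end MLaux

theorem regularized_symbol_bound (α T : ℝ) (hα : α ∈ Set.Ioo (0 : ℝ) 1) (hT : 0 < T) :
    ∃ c : ℝ, 0 < c ∧ ∀ γ : ℝ, 0 < γ → ∀ lam : ℝ, 0 ≤ lam → ∀ t : ℝ, t ∈ Set.Ioc (0 : ℝ) T →
      mittagLeffler α (-(lam * t ^ α)) / (γ + mittagLeffler α (-(lam * T ^ α)))
        ≤ min γ⁻¹ (c * t ^ (-α)) := by
  have hg : 0 < Real.Gamma (1 - α) := Real.Gamma_pos_of_pos (by linarith [hα.2])
  have hg1 : 0 < Real.Gamma (α + 1) := Real.Gamma_pos_of_pos (by linarith [hα.1])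
  have hTa : 0 < T ^ α := Real.rpow_pos_of_pos hT _
  set g := Real.Gamma (1 - α)
  set g1 := Real.Gamma (α + 1)
  refine ⟨(1 + g * g1) * T ^ α, by positivity, ?_⟩
  intro γ hγ lam hlam t ht
  have hta : 0 < t ^ α := Real.rpow_pos_of_pos ht.1 _
  have htT : t ^ α ≤ T ^ α := Real.rpow_le_rpow ht.1.le ht.2 hα.1.le
  have hx : 0 ≤ lam * t ^ α := by positivity
  have hX : 0 ≤ lam * T ^ α := by positivity
  have hA := MLaux.ml_pos hα hx
  have hB := MLaux.ml_pos hα hX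
  have hA1 : mittagLeffler α (-(lam * t ^ α)) ≤ 1 := by
    have := MLaux.ml_anti hα le_rfl hx
    rwa [MLaux.ml_zero] at this
  have hU := MLaux.ml_upper hα hx
  have hL := MLaux.ml_lower hα hX
  set A := mittagLeffler α (-(lam * t ^ α))
  set B := mittagLeffler α (-(lam * T ^ α))
  refine le_min ?_ ?_
  · rw [div_le_iff₀ (by linarith), inv_mul_eq_div, le_div_iff₀ hγ]
    nlinarith
  · rw [div_le_iff₀ (by linarith), Real.rpow_neg ht.1.le]
    rw [div_le_iff₀ (by positivity)] at hL
    change A * (1 + lam * t ^ α / g1) ≤ 1 at hU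
    have k1 : A * (lam * t ^ α) ≤ g1 := by
      have : A * (lam * t ^ α / g1) ≤ 1 := by linarith
      rw [← mul_div_assoc, div_le_one hg1] at this
      exact this
    have k2 : A * t ^ α * (1 + g * (lam * T ^ α)) ≤ (1 + g * g1) * T ^ α := by
      have a1 : A * t ^ α ≤ T ^ α := by nlinarith
      have a2 := mul_le_mul_of_nonneg_left k1 (mul_pos hg hTa).le
      nlinarith
    have k3 : A * t ^ α ≤ (1 + g * g1) * T ^ α * B := by
      calc A * t ^ α ≤ A * t ^ α * (B * (1 + g * (lam * T ^ α))) :=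
            le_mul_of_one_le_right (by positivity) hL
        _ = (A * t ^ α * (1 + g * (lam * T ^ α))) * B := by ring
        _ ≤ _ := mul_le_mul_of_nonneg_right k2 hB.le
    have k4 : 0 ≤ (1 + g * g1) * T ^ α * γ := by positivity
    calc A = (A * t ^ α) * (t ^ α)⁻¹ := by field_simp
      _ ≤ ((1 + g * g1) * T ^ α * (γ + B)) * (t ^ α)⁻¹ :=
          mul_le_mul_of_nonneg_right (by linarith) (by positivity)
      _ = _ := by ring
end
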